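/- Suppose C = (1, c_2, ..., c_n) is orderly, m ≥ 3, c_{m-1} > 2·c_{m-2}, and c_m > 2·c_{m-1}. Then for every t with m ≤ t < n, c_{t+1} - c_t ≥ c_m - c_{m-1}. -/

import Mathlib

/-- The largest coin value in `C` that is at most `v` (or 0 if none). -/
def coinMax (C : List ℕ) (v : ℕ) : ℕ := (C.filter (· ≤ v)).foldr max 0

/-- Fuelled greedy coin count. -/
def grdAux (C : List ℕ) : ℕ → ℕ → ℕ
  | 0, _ => 0
  | fuel + 1, v =>
    let c := coinMax C v
    if v = 0 ∨ c = 0 then 0 else 1 + grdAux C fuel (v - c)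

/-- Number of coins used by the greedy algorithm to represent `v` with coin system `C`. -/
def grd (C : List ℕ) (v : ℕ) : ℕ := grdAux C v v

/-- The set of sizes of representations of `v` as nonnegative integer combinations of
the coin values in `C`. -/
def reprCosts (C : List ℕ) (v : ℕ) : Set ℕ :=
  {k | ∃ x : List ℕ, x.length = C.length ∧ (List.zipWith (· * ·) x C).sum = v ∧ x.sum = k}

/-- Minimum number of coins needed to represent `v` with coin system `C`. -/
noncomputable def opt (C : List ℕ) (v : ℕ) : ℕ := sInf (reprCosts C v)

/-- A coin system is orderly if greedy is optimal for every positive value. -/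
def Orderly (C : List ℕ) : Prop := ∀ v : ℕ, 0 < v → grd C v = opt C v

/-!
Greedy optimality on a sum `x + y` of two coins says that after subtracting the largest coin
`w ≤ x + y`, the remainder `x + y - w` is zero or a coin. Let `b < c` be consecutive coins with
`2 * b < c`, and let `a` with `2 * a < b` bound the coins below `b`; then a remainder below `c` is
at most `a` or equal to `b`.

Suppose that some gap between consecutive coins from `c` on is shorter than `c - b`, and let
`u < u'` be the last such gap. Reducing `u + b`, `u + c` and `u' + c` shows that `u' = u + (b - z)`
for some `z ≤ a` and that the gap following `u'` is exactly `c - b`. Let `v` be the last coin beyond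
`u` followed by a gap `c - b`; reducing `x + c` for `x > v` shows that the gaps beyond `v` are at
least `c - a`. These are so long that `v + p` and `v + (p + (b - z))` have the same largest coin
whenever `p` and `p + (b - z)` are coins with `c ≤ p`, and that the two remainders, which are at
least `c`, form a smaller such pair. Infinite descent from `p = u` is the contradiction.
-/

/-- `s` is a set in which any two distinct elements are at distance at least `d`. -/
def Spaced (d : ℕ) (s : Set ℕ) : Prop :=
  ∀ ⦃x⦄, x ∈ s → ∀ ⦃y⦄, y ∈ s → x < y → x + d ≤ y

/-- The coin set `S` represents every sum of two of its coins greedily by at most two coins: the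
remainder left by the largest coin is zero or a coin. -/
def GreedyClosed (S : Set ℕ) : Prop :=
  ∀ ⦃x⦄, x ∈ S → ∀ ⦃y⦄, y ∈ S → ∀ ⦃w⦄, IsGreatest (S ∩ Set.Iic (x + y)) w →
    x + y - w ∈ insert 0 S

/-- `b` and `c` are consecutive elements of `S`, and `a`, `b`, `c` grow by factors larger than two,
where `a` bounds the elements of `S` below `b`; `a` itself need not lie in `S`. -/
structure DoublingTriple (S : Set ℕ) (a b c : ℕ) : Prop where
  mid_mem : b ∈ S
  top_mem : c ∈ S
  two_mul_lt_mid : 2 * a < b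
  two_mul_lt_top : 2 * b < c
  le_or_eq_of_lt : ∀ x ∈ S, x < c → x ≤ a ∨ x = b

section Gaps

variable {S : Set ℕ} {a b c d u : ℕ}

namespace Spaced

lemma isGreatest_inter_Iic (hd : Spaced d (S ∩ Set.Ioi u)) {w n : ℕ} (hw : w ∈ S) (huw : u < w)
    (hwn : w ≤ n) (hnw : n < w + d) : IsGreatest (S ∩ Set.Iic n) w := by
  refine ⟨⟨hw, hwn⟩, fun y ⟨hy, hyn⟩ => ?_⟩
  by_contra! hwy
  exact (hd ⟨hw, huw⟩ ⟨hy, huw.trans hwy⟩ hwy).not_gt (lt_of_le_of_lt hyn hnw)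

lemma exists_last_short_gap (hS : BddAbove S) (h : ¬ Spaced d (S ∩ Set.Ici c)) :
    ∃ u ∈ S, c ≤ u ∧ (∃ u' ∈ S, u < u' ∧ u' < u + d) ∧ Spaced d (S ∩ Set.Ioi u) := by
  simp only [Spaced, Set.mem_inter_iff, Set.mem_Ici, not_forall, not_le] at h
  obtain ⟨x, ⟨hx, hcx⟩, y, ⟨hy, -⟩, hxy, hyd⟩ := h
  obtain ⟨u, ⟨hu, hcu, hgap⟩, hlast⟩ := BddAbove.exists_isGreatest_of_nonempty
    (S := {u ∈ S | c ≤ u ∧ ∃ u' ∈ S, u < u' ∧ u' < u + d})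
    (hS.mono (Set.sep_subset _ _)) ⟨x, hx, hcx, y, hy, hxy, hyd⟩
  refine ⟨u, hu, hcu, hgap, fun x ⟨hx, hux⟩ y ⟨hy, _⟩ hxy => ?_⟩
  by_contra! hyd
  exact (hlast ⟨hx, hcu.trans (Set.mem_Ioi.1 hux).le, y, hy, hxy, hyd⟩).not_gt hux

end Spaced

namespace DoublingTriple

lemma sub_le_or_eq (hT : DoublingTriple S a b c) (hS : GreedyClosed S) {x y w : ℕ} (hx : x ∈ S)
    (hy : y ∈ S) (hw : IsGreatest (S ∩ Set.Iic (x + y)) w) (hc : x + y < w + c) :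
    x + y - w ≤ a ∨ x + y - w = b := by
  rcases hS hx hy hw with h | h
  · exact Or.inl (h ▸ Nat.zero_le a)
  · exact hT.le_or_eq_of_lt _ h (by have := hT.two_mul_lt_top; omega)

lemma sub_le_or_eq_of_spaced (hT : DoublingTriple S a b c) (hS : GreedyClosed S) {e : ℕ}
    (hd : Spaced (c - e) (S ∩ Set.Ioi u)) {x y w : ℕ} (hx : x ∈ S) (hy : y ∈ S) (hw : w ∈ S)
    (huw : u < w) (hle : w ≤ x + y) (hlt : x + y < w + (c - e)) :
    x + y - w ≤ a ∨ x + y - w = b :=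
  hT.sub_le_or_eq hS hx hy (hd.isGreatest_inter_Iic hw huw hle hlt) (by omega)

lemma gap_eq_or_le (hT : DoublingTriple S a b c) (hS : GreedyClosed S)
    (hd : Spaced (c - b) (S ∩ Set.Ioi u)) {x y : ℕ} (hx : x ∈ S) (hux : u < x) (hy : y ∈ S)
    (hxy : x < y) : y = x + (c - b) ∨ x + (c - a) ≤ y := by
  have hbc := hT.two_mul_lt_top
  have hgap := hd ⟨hx, hux⟩ ⟨hy, hux.trans hxy⟩ hxy
  by_contra! ⟨hne, hlt⟩
  have hrem := hT.sub_le_or_eq_of_spaced hS hd hx hT.top_mem hy (hux.trans hxy) (by omega)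
    (by omega)
  omega

lemma exists_spaced_sub_low (hT : DoublingTriple S a b c) (hS : GreedyClosed S)
    (hbdd : BddAbove S) (hd : Spaced (c - b) (S ∩ Set.Ioi u)) {x : ℕ} (hx : x ∈ S) (hux : u < x)
    (hx' : x + (c - b) ∈ S) :
    ∃ v ∈ S, v + (c - b) ∈ S ∧ Spaced (c - a) (S ∩ Set.Ioi v) := by
  obtain ⟨v, ⟨hv, huv, hv'⟩, hlast⟩ := BddAbove.exists_isGreatest_of_nonempty
    (S := {v ∈ S | u < v ∧ v + (c - b) ∈ S}) (hbdd.mono (Set.sep_subset _ _)) ⟨x, hx, hux, hx'⟩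
  refine ⟨v, hv, hv', fun x ⟨hx, hvx⟩ y ⟨hy, _⟩ hxy => ?_⟩
  rw [Set.mem_Ioi] at hvx
  refine (hT.gap_eq_or_le hS hd hx (huv.trans hvx) hy hxy).resolve_left fun hgap => ?_
  exact (hlast ⟨hx, huv.trans hvx, hgap ▸ hy⟩).not_gt hvx

lemma exists_mem_of_short_gap (hT : DoublingTriple S a b c) (hS : GreedyClosed S) {u' : ℕ}
    (hu : u ∈ S) (hu' : u' ∈ S) (huu' : u < u') (hgap : u' < u + (c - b)) :
    ∃ u'' ∈ S, u' < u'' ∧ u'' ≤ u + c := by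
  by_contra! hnone
  have hgreatest : IsGreatest (S ∩ Set.Iic (u + c)) u' :=
    ⟨⟨hu', by simp only [Set.mem_Iic]; omega⟩,
      fun w ⟨hw, hwc⟩ => not_lt.1 fun hlt => (hnone w hw hlt).not_ge hwc⟩
  have hrem := hT.sub_le_or_eq hS hu hT.top_mem hgreatest (by omega)
  have := hT.two_mul_lt_mid
  omega

lemma last_short_gap_eq (hT : DoublingTriple S a b c) (hS : GreedyClosed S) {u' : ℕ}
    (hu : u ∈ S) (hu' : u' ∈ S) (huu' : u < u') (hgap : u' < u + (c - b))
    (hd : Spaced (c - b) (S ∩ Set.Ioi u)) :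
    ∃ z ≤ a, u' = u + (b - z) ∧ u' + (c - b) ∈ S := by
  have hab := hT.two_mul_lt_mid
  have hbc := hT.two_mul_lt_top
  obtain ⟨u'', hu'', hlt, hle⟩ := hT.exists_mem_of_short_gap hS hu hu' huu' hgap
  have hnext := hd ⟨hu', huu'⟩ ⟨hu'', huu'.trans hlt⟩ hlt
  have hrem : u + c - u'' ≤ a := (hT.sub_le_or_eq_of_spaced hS hd hu hT.top_mem hu''
    (huu'.trans hlt) hle (by omega)).resolve_right (by omega)
  have hrem_mid : u + b - u' ≤ a := (hT.sub_le_or_eq_of_spaced hS hd hu hT.mid_mem hu' huu'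
    (by omega) (by omega)).resolve_right (by omega)
  have hrem_top : u' + c - u'' = b := (hT.sub_le_or_eq_of_spaced hS hd hu' hT.top_mem hu''
    (huu'.trans hlt) (by omega) (by omega)).resolve_left (by omega)
  have hnext_eq : u' + (c - b) = u'' := by omega
  exact ⟨u + c - u'', hrem, by omega, hnext_eq ▸ hu''⟩

section Descent

variable {v z p : ℕ}

lemma add_lt_of_mem_of_add_lt (hT : DoublingTriple S a b c) (hS : GreedyClosed S) (hv : v ∈ S)
    (hv' : v + (c - b) ∈ S) (hd : Spaced (c - a) (S ∩ Set.Ioi v)) (hp' : p + (b - z) ∈ S)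
    {w : ℕ} (hw : w ∈ S) (hlt : v + p < w) : v + (p + (b - z)) < w := by
  have hab := hT.two_mul_lt_mid
  have hbc := hT.two_mul_lt_top
  by_contra! hle
  have hrem : v + (p + (b - z)) - w ≤ a := (hT.sub_le_or_eq_of_spaced hS hd hv hp' hw (by omega)
    hle (by omega)).resolve_right (by omega)
  -- This remainder exceeds the previous one by `c - b`, so it lies strictly between `b` and `c`.
  have hrem_next := hT.sub_le_or_eq_of_spaced hS hd hv' hp' hw (by omega) (by omega) (by omega)
  omega

lemma exists_smaller_pair (hT : DoublingTriple S a b c) (hS : GreedyClosed S) (hv : v ∈ S)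
    (hv' : v + (c - b) ∈ S) (hd : Spaced (c - a) (S ∩ Set.Ioi v)) (hz : z ≤ a) (hp : p ∈ S)
    (hcp : c ≤ p) (hp' : p + (b - z) ∈ S) :
    ∃ q < p, q ∈ S ∧ c ≤ q ∧ q + (b - z) ∈ S := by
  have hab := hT.two_mul_lt_mid
  have hbc := hT.two_mul_lt_top
  obtain ⟨w, hw⟩ := BddAbove.exists_isGreatest_of_nonempty
    (bddAbove_Iic.mono Set.inter_subset_right)
    (⟨v, hv, Nat.le_add_right v p⟩ : (S ∩ Set.Iic (v + p)).Nonempty)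
  have hwp : w ≤ v + p := hw.1.2
  have hvw : v + (c - b) ≤ w := hw.2 ⟨hv', by simp only [Set.mem_Iic]; omega⟩
  have hw' : IsGreatest (S ∩ Set.Iic (v + (p + (b - z)))) w :=
    ⟨⟨hw.1.1, by simp only [Set.mem_Iic]; omega⟩, fun y ⟨hy, hyp⟩ => hw.2 ⟨hy, not_lt.1 fun hlt =>
      (hT.add_lt_of_mem_of_add_lt hS hv hv' hd hp' hy hlt).not_ge hyp⟩⟩
  have hc : c ≤ v + p - w := by
    by_contra! hlt
    have hrem := hT.sub_le_or_eq hS hv hp hw (by omega)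
    have hrem_shift := hT.sub_le_or_eq hS hv hp' hw' (by omega)
    have hrem_eq : v + p - w = z := by omega
    -- This remainder is `z + (c - b)`, which lies strictly between `b` and `c`.
    have hrem_next := hT.sub_le_or_eq_of_spaced hS hd hv' hp hw.1.1 (by omega) (by omega) (by omega)
    omega
  have hq' : v + (p + (b - z)) - w = v + p - w + (b - z) := by omega
  exact ⟨v + p - w, by omega, (hS hv hp hw).resolve_left (by omega), hc,
    hq' ▸ (hS hv hp' hw').resolve_left (by omega)⟩

lemma add_notMem (hT : DoublingTriple S a b c) (hS : GreedyClosed S) (hv : v ∈ S)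
    (hv' : v + (c - b) ∈ S) (hd : Spaced (c - a) (S ∩ Set.Ioi v)) (hz : z ≤ a) (hp : p ∈ S)
    (hcp : c ≤ p) : p + (b - z) ∉ S := by
  induction p using Nat.strong_induction_on with
  | h p ih =>
    intro hp'
    obtain ⟨q, hqp, hq, hcq, hq'⟩ := hT.exists_smaller_pair hS hv hv' hd hz hp hcp hp'
    exact ih q hqp hq hcq hq'

end Descent

theorem spaced_inter_Ici (hT : DoublingTriple S a b c) (hS : GreedyClosed S)
    (hbdd : BddAbove S) : Spaced (c - b) (S ∩ Set.Ici c) := by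
  by_contra h
  obtain ⟨u, hu, hcu, ⟨u', hu', huu', hgap⟩, hd⟩ := Spaced.exists_last_short_gap hbdd h
  obtain ⟨z, hz, rfl, hnext⟩ := hT.last_short_gap_eq hS hu hu' huu' hgap hd
  obtain ⟨v, hv, hv', hdv⟩ := hT.exists_spaced_sub_low hS hbdd hd hu' huu' hnext
  exact hT.add_notMem hS hv hv' hdv hz hu hcu hu'

end DoublingTriple

end Gaps

section CoinSystem

variable {C : List ℕ} {v w k l x y : ℕ}

lemma mem_reprCosts_cons {r : ℕ} :
    k ∈ reprCosts (r :: C) v ↔ ∃ n, ∃ w, ∃ l ∈ reprCosts C w, n * r + w = v ∧ n + l = k := by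
  constructor
  · rintro ⟨_ | ⟨n, X⟩, hlen, rfl, rfl⟩
    · simp at hlen
    · exact ⟨n, _, _, ⟨X, by simpa using hlen, rfl, rfl⟩, by simp, by simp⟩
  · rintro ⟨n, _, _, ⟨X, hlen, rfl, rfl⟩, rfl, rfl⟩
    exact ⟨n :: X, by simp [hlen], by simp, by simp⟩

lemma zero_mem_reprCosts (C : List ℕ) : 0 ∈ reprCosts C 0 := by
  induction C with
  | nil => exact ⟨[], rfl, rfl, rfl⟩
  | cons r C ih => exact mem_reprCosts_cons.2 ⟨0, 0, 0, ih, by simp, rfl⟩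

lemma one_mem_reprCosts (hx : x ∈ C) : 1 ∈ reprCosts C x := by
  induction C with
  | nil => simp at hx
  | cons r C ih =>
    rcases List.mem_cons.1 hx with rfl | hx
    · exact mem_reprCosts_cons.2 ⟨1, 0, 0, zero_mem_reprCosts C, by simp, rfl⟩
    · exact mem_reprCosts_cons.2 ⟨0, x, 1, ih hx, by simp, rfl⟩

lemma add_mem_reprCosts (hk : k ∈ reprCosts C v) (hl : l ∈ reprCosts C w) :
    k + l ∈ reprCosts C (v + w) := by
  induction C generalizing v w k l with
  | nil =>
    obtain ⟨X, hX, rfl, rfl⟩ := hk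
    obtain ⟨Y, hY, rfl, rfl⟩ := hl
    rw [List.length_eq_zero_iff.1 hX, List.length_eq_zero_iff.1 hY]
    exact zero_mem_reprCosts []
  | cons r C ih =>
    obtain ⟨m, v', k', hk', rfl, rfl⟩ := mem_reprCosts_cons.1 hk
    obtain ⟨n, w', l', hl', rfl, rfl⟩ := mem_reprCosts_cons.1 hl
    exact mem_reprCosts_cons.2 ⟨m + n, v' + w', k' + l', ih hk' hl', by ring, by ring⟩

lemma opt_add_le_two (hx : x ∈ C) (hy : y ∈ C) : opt C (x + y) ≤ 2 :=
  Nat.sInf_le (add_mem_reprCosts (one_mem_reprCosts hx) (one_mem_reprCosts hy))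

lemma Orderly.grd_add_le_two (hC : Orderly C) (hx : x ∈ C) (hy : y ∈ C) :
    grd C (x + y) ≤ 2 := by
  rcases Nat.eq_zero_or_pos (x + y) with h | h
  · simp [h, grd, grdAux]
  · exact (hC _ h).trans_le (opt_add_le_two hx hy)

lemma coinMax_eq_of_isGreatest (hw : IsGreatest ({x | x ∈ C} ∩ Set.Iic v) w) :
    coinMax C v = w := by
  refine le_antisymm (List.max_le_of_forall_le _ _ fun x hx => ?_)
    (List.le_max_of_le (List.mem_filter.2 ⟨hw.1.1, by simpa using hw.1.2⟩) le_rfl)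
  rw [List.mem_filter, decide_eq_true_iff] at hx
  exact hw.2 hx

lemma isGreatest_coinMax (h : ({x | x ∈ C} ∩ Set.Iic v).Nonempty) :
    IsGreatest ({x | x ∈ C} ∩ Set.Iic v) (coinMax C v) := by
  obtain ⟨w, hw⟩ := BddAbove.exists_isGreatest_of_nonempty
    (bddAbove_Iic.mono Set.inter_subset_right) h
  rwa [coinMax_eq_of_isGreatest hw]

lemma grdAux_eq_grdAux {n n' : ℕ} (hn : v ≤ n) (hn' : v ≤ n') :
    grdAux C n v = grdAux C n' v := by
  induction n generalizing n' v with
  | zero => cases n' <;> simp [grdAux, Nat.le_zero.1 hn]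
  | succ n ih =>
    rcases n' with _ | n'
    · simp [grdAux, Nat.le_zero.1 hn']
    · simp only [grdAux]
      split_ifs with h
      · rfl
      · rw [ih (by omega) (by omega : v - coinMax C v ≤ n')]

lemma grdAux_eq_grd {n : ℕ} (hv : v ≤ n) : grdAux C n v = grd C v :=
  grdAux_eq_grdAux hv le_rfl

lemma grd_eq_one_add (hv : 0 < v) (hc : 0 < coinMax C v) :
    grd C v = 1 + grd C (v - coinMax C v) := by
  obtain ⟨n, rfl⟩ := Nat.exists_eq_add_one.2 hv
  rw [grd, grdAux, if_neg (by omega), grdAux_eq_grd (by omega)]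

lemma coinMax_pos (h1 : 1 ∈ C) (hv : 0 < v) : 0 < coinMax C v :=
  (isGreatest_coinMax ⟨1, h1, hv⟩).2 ⟨h1, hv⟩

lemma mem_of_grd_le_one (h1 : 1 ∈ C) (hv : 0 < v) (h : grd C v ≤ 1) : v ∈ C := by
  have hcoin : coinMax C v ∈ C ∧ coinMax C v ≤ v := (isGreatest_coinMax ⟨1, h1, hv⟩).1
  rw [grd_eq_one_add hv (coinMax_pos h1 hv)] at h
  rcases Nat.eq_zero_or_pos (v - coinMax C v) with hzero | hpos
  · exact (by omega : coinMax C v = v) ▸ hcoin.1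
  · rw [grd_eq_one_add hpos (coinMax_pos h1 hpos)] at h
    omega

lemma greedyClosed_of_grd_add_le_two (h1 : 1 ∈ C)
    (hgrd : ∀ x ∈ C, ∀ y ∈ C, grd C (x + y) ≤ 2) : GreedyClosed {x | x ∈ C} := by
  intro x hx y hy w hw
  rcases Nat.eq_zero_or_pos (x + y - w) with hzero | hpos
  · exact Or.inl hzero
  · have hsum : 0 < x + y := by omega
    have hle := hgrd x hx y hy
    rw [grd_eq_one_add hsum (coinMax_pos h1 hsum), coinMax_eq_of_isGreatest hw] at hle
    exact Or.inr (mem_of_grd_le_one h1 hpos (by omega))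

lemma doublingTriple_getElem (hC : C.SortedLT) (hk : k + 2 < C.length)
    (hlow : 2 * C[k] < C[k + 1]) (hmid : 2 * C[k + 1] < C[k + 2]) :
    DoublingTriple {x | x ∈ C} C[k] C[k + 1] C[k + 2] where
  mid_mem := List.getElem_mem _
  top_mem := List.getElem_mem _
  two_mul_lt_mid := hlow
  two_mul_lt_top := hmid
  le_or_eq_of_lt x hx hlt := by
    obtain ⟨i, hi, rfl⟩ := List.mem_iff_getElem.1 hx
    rw [hC.getElem_lt_getElem_iff] at hlt
    rcases (Nat.lt_succ_iff.1 hlt).eq_or_lt with rfl | hik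
    · exact Or.inr rfl
    · exact Or.inl (hC.getElem_le_getElem_iff.2 (Nat.lt_succ_iff.1 hik))

end CoinSystem

theorem stmt_10_general (C : List ℕ) (hchain : List.IsChain (· < ·) C)
    (hhead : C.getD 0 0 = 1) (hgrd : ∀ x ∈ C, ∀ y ∈ C, grd C (x + y) ≤ 2)
    (m : ℕ) (hm : 3 ≤ m)
    (h1 : 2 * C.getD (m - 3) 0 < C.getD (m - 2) 0)
    (h2 : 2 * C.getD (m - 2) 0 < C.getD (m - 1) 0) :
    ∀ t : ℕ, m ≤ t → t < C.length →
      C.getD (m - 1) 0 - C.getD (m - 2) 0 ≤ C.getD t 0 - C.getD (t - 1) 0 := by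
  intro t hmt ht
  obtain ⟨k, rfl⟩ := Nat.exists_eq_add_of_le' hm
  have hsorted : C.SortedLT := List.sortedLT_iff_isChain.2 hchain
  have getD_eq {i : ℕ} (hi : i ≤ t) : C.getD i 0 = C[i] := List.getD_eq_getElem _ _ _
  have hone : 1 ∈ C := hhead ▸ getD_eq t.zero_le ▸ List.getElem_mem _
  simp only [Nat.add_sub_cancel, Nat.reduceSubDiff, getD_eq (by omega : k ≤ t),
    getD_eq (by omega : k + 1 ≤ t), getD_eq (by omega : k + 2 ≤ t), getD_eq le_rfl,
    getD_eq (t.sub_le 1)] at h1 h2 ⊢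
  have hspaced := (doublingTriple_getElem hsorted (by omega) h1 h2).spaced_inter_Ici
    (greedyClosed_of_grd_add_le_two hone hgrd) C.finite_toSet.bddAbove
  exact Nat.le_sub_of_add_le' <| hspaced
    ⟨List.getElem_mem _, hsorted.getElem_le_getElem_iff.2 (by omega)⟩
    ⟨List.getElem_mem _, hsorted.getElem_le_getElem_iff.2 (by omega)⟩
    (hsorted.getElem_lt_getElem_iff.2 (by omega))

theorem stmt_10 (C : List ℕ) (hchain : List.Chain' (· < ·) C)
    (hhead : C.getD 0 0 = 1) (hord : Orderly C)
    (m : ℕ) (hm : 3 ≤ m) (hmn : m ≤ C.length)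
    (h1 : 2 * C.getD (m - 3) 0 < C.getD (m - 2) 0)
    (h2 : 2 * C.getD (m - 2) 0 < C.getD (m - 1) 0) :
    ∀ t : ℕ, m ≤ t → t < C.length →
      C.getD (m - 1) 0 - C.getD (m - 2) 0 ≤ C.getD t 0 - C.getD (t - 1) 0 :=
  stmt_10_general C hchain hhead (fun _ hx _ hy => hord.grd_add_le_two hx hy) m hm h1 h2
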